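/- arXiv:1302.5168 — 3 statements merged into one kernel-verified Lean document; each statement's English description precedes it below -/
import Mathlib

section
/- Let q ≥ 2, let x ∈ ℝ^d with ‖x‖ = 1, and for a (q−1)×d matrix W with i.i.d. standard Gaussian entries set E_x(u) = E_W ⟨s_{Q_W(x)}, W u⟩ for u ∈ ℝ^d. Then for every u in the Euclidean unit ball B^d, (1/2) ‖u − x‖^2 ≤ (1/λ(q)) ( E_x(x) − E_x(u) ). -/
/-!
Write `c W` for the codeword selected by `x`, so that `E_x(v) = E ⟪c W, W v⟫` is linear in `v`.
Since `W v` is distributed as `‖v‖ g` with `g` standard Gaussian, bounding `⟪c W, W v⟫` by the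
maximum over all codewords gives `E_x(v) ≤ λ ‖v‖`, with equality at the unit vector `x`, where
`c W` is the maximizer. A linear functional touching `λ ‖·‖` at `x` must be the derivative of
`λ ‖·‖` there, so `E_x(v) = λ ⟪x, v⟫`, and the excess risk is
`λ (1 - ⟪x, u⟫) ≥ λ ‖u - x‖² / 2`.
-/

open MeasureTheory ProbabilityTheory
open scoped RealInnerProductSpace ENNReal Pointwise

/-- The standard Gaussian measure on `EuclideanSpace ℝ (Fin n)`. -/
noncomputable def stdGaussian (n : ℕ) : Measure (EuclideanSpace ℝ (Fin n)) :=
  (Measure.pi fun _ : Fin n => gaussianReal 0 1).map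
    (EuclideanSpace.equiv (Fin n) ℝ).symm

/-- The law of an `n × d` random matrix with i.i.d. standard Gaussian entries. -/
noncomputable def stdGaussianMatrix (n d : ℕ) : Measure (Fin n → Fin d → ℝ) :=
  Measure.pi fun _ : Fin n => Measure.pi fun _ : Fin d => gaussianReal 0 1

/-- Action of a matrix (given as `Fin n → Fin d → ℝ`) on a vector of `EuclideanSpace ℝ (Fin d)`,
producing a vector in `EuclideanSpace ℝ (Fin n)`. -/
noncomputable def act {n d : ℕ} (W : Fin n → Fin d → ℝ) (x : EuclideanSpace ℝ (Fin d)) :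
    EuclideanSpace ℝ (Fin n) :=
  (EuclideanSpace.equiv (Fin n) ℝ).symm (fun k => ∑ j, W k j * x j)

/-- A simplex coding: `q` unit vectors in `ℝ^{q-1}` with pairwise inner products `-1/(q-1)`
summing to zero. -/
def IsSimplexCoding {q : ℕ} (s : Fin q → EuclideanSpace ℝ (Fin (q - 1))) : Prop :=
  (∀ j, ‖s j‖ = 1) ∧ (∀ i j, i ≠ j → ⟪s i, s j⟫ = -(1 / ((q : ℝ) - 1))) ∧ (∑ j, s j = 0)

/-- The Gaussian mean width of a set `K ⊆ ℝ^d`. -/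
noncomputable def meanWidth {d : ℕ} (K : Set (EuclideanSpace ℝ (Fin d))) : ℝ :=
  ∫ g, sSup ((fun z => ⟪g, z⟫) '' (K - K)) ∂(stdGaussian d)

/-- `λ(q) = E max_j ⟨s_j, g⟩` for a standard Gaussian `g` in `ℝ^{q-1}`. -/
noncomputable def lambdaQ {q : ℕ} (s : Fin q → EuclideanSpace ℝ (Fin (q - 1))) : ℝ :=
  ∫ g, (⨆ j, ⟪s j, g⟫) ∂(stdGaussian (q - 1))

section InnerProduct

variable {F : Type*} [NormedAddCommGroup F] [InnerProductSpace ℝ F]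

theorem half_norm_sub_sq_le_one_sub_inner {x u : F} (hx : ‖x‖ = 1) (hu : ‖u‖ ≤ 1) :
    1 / 2 * ‖u - x‖ ^ 2 ≤ 1 - ⟪x, u⟫ := by
  rw [norm_sub_sq_real, hx, real_inner_comm]
  nlinarith [norm_nonneg u]

theorem eq_mul_inner_of_le_mul_norm {f : F → ℝ} (hf : IsLinearMap ℝ f) {C : ℝ}
    (hle : ∀ v, f v ≤ C * ‖v‖) {x : F} (hx : ‖x‖ = 1) (hfx : f x = C) (v : F) :
    f v = C * ⟪x, v⟫ := by
  have hC : 0 ≤ C := by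
    have h := hle (-x)
    rw [hf.map_neg, norm_neg, hx, hfx] at h
    linarith
  -- By AM-GM, `C * ‖y‖ ≤ C / 2 * (‖y‖ ^ 2 + 1)` with equality at `x`: this smooth majorant of `f`
  -- touches `f` at `x`, so both have the same derivative there.
  let gap : ℝ → ℝ := fun t ↦ C / 2 * (‖x + t • v‖ ^ 2 + 1) - (C + t * f v)
  have gap_zero : gap 0 = 0 := by
    simp only [gap, zero_smul, add_zero, zero_mul, hx]
    ring
  have gap_nonneg (t : ℝ) : 0 ≤ gap t := by
    have h := hle (x + t • v)
    rw [hf.map_add, hf.map_smul, hfx, smul_eq_mul] at h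
    have := mul_nonneg hC (sq_nonneg (‖x + t • v‖ - 1))
    simp only [gap]
    linarith
  have hasDerivAt_gap : HasDerivAt gap (C * ⟪x, v⟫ - f v) 0 := by
    have hline : HasDerivAt (fun t : ℝ ↦ x + t • v) v 0 := by
      simpa using ((hasDerivAt_id (0 : ℝ)).smul_const v).const_add x
    refine (((hline.norm_sq.add_const 1).const_mul (C / 2)).sub
      (((hasDerivAt_id (0 : ℝ)).mul_const (f v)).const_add C)).congr_deriv ?_
    rw [zero_smul, add_zero]
    ring
  have hmin : IsLocalMin gap 0 :=
    Filter.Eventually.of_forall fun t ↦ gap_zero.trans_le (gap_nonneg t)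
  linarith [hmin.hasDerivAt_eq_zero hasDerivAt_gap]

end InnerProduct

section SupportFunction

variable {ι E : Type*} [NormedAddCommGroup E] [InnerProductSpace ℝ E] {s : ι → E}

/-- The support function `g ↦ sup_j ⟪s j, g⟫` of a family of vectors. It is only meaningful for a
nonempty bounded family: the supremum of an empty or unbounded set of reals is `0`. -/
noncomputable def supportFunction (s : ι → E) (g : E) : ℝ :=
  ⨆ j, ⟪s j, g⟫

theorem inner_le_supportFunction (hs : Bornology.IsBounded (Set.range s)) (j : ι) (g : E) :
    ⟪s j, g⟫ ≤ supportFunction s g := by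
  obtain ⟨C, hC⟩ := hs.exists_norm_le
  refine le_ciSup (f := fun j ↦ ⟪s j, g⟫) ⟨C * ‖g‖, ?_⟩ j
  rintro _ ⟨i, rfl⟩
  beta_reduce
  grw [real_inner_le_norm, hC _ ⟨i, rfl⟩]

theorem supportFunction_eq_inner (hs : Bornology.IsBounded (Set.range s)) {i : ι} {g : E}
    (hi : ∀ j, ⟪s j, g⟫ ≤ ⟪s i, g⟫) : supportFunction s g = ⟪s i, g⟫ :=
  have : Nonempty ι := ⟨i⟩
  (ciSup_le hi).antisymm (inner_le_supportFunction hs i g)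

theorem supportFunction_smul_of_nonneg (s : ι → E) {r : ℝ} (hr : 0 ≤ r) (g : E) :
    supportFunction s (r • g) = r * supportFunction s g := by
  simp only [supportFunction, inner_smul_right, Real.mul_iSup_of_nonneg hr]

theorem exists_lipschitzWith_supportFunction [Nonempty ι]
    (hs : Bornology.IsBounded (Set.range s)) : ∃ K, LipschitzWith K (supportFunction s) := by
  obtain ⟨C, hC⟩ := hs.exists_norm_le
  refine ⟨_, .of_le_add_mul' C fun g h ↦ ciSup_le fun j ↦ ?_⟩
  calc ⟪s j, g⟫ = ⟪s j, h⟫ + ⟪s j, g - h⟫ := by rw [inner_sub_right, add_sub_cancel]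
    _ ≤ supportFunction s h + C * dist g h := by
      grw [inner_le_supportFunction hs j h, real_inner_le_norm, hC _ ⟨j, rfl⟩, dist_eq_norm]

theorem continuous_supportFunction [Nonempty ι] (hs : Bornology.IsBounded (Set.range s)) :
    Continuous (supportFunction s) :=
  (exists_lipschitzWith_supportFunction hs).choose_spec.continuous

theorem integrable_supportFunction_comp [Nonempty ι] (hs : Bornology.IsBounded (Set.range s))
    {Ω : Type*} [MeasurableSpace Ω] {μ : Measure Ω} {X : Ω → E} (hX : Integrable X μ) :
    Integrable (fun ω ↦ supportFunction s (X ω)) μ := by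
  obtain ⟨K, hK⟩ := exists_lipschitzWith_supportFunction hs
  rw [← memLp_one_iff_integrable] at hX ⊢
  exact hK.comp_memLp (by simp [supportFunction]) hX

end SupportFunction

section GaussianWidth

variable {ι E : Type*} [NormedAddCommGroup E] [InnerProductSpace ℝ E] [FiniteDimensional ℝ E]
  [MeasurableSpace E] [BorelSpace E] {s : ι → E}

theorem integral_inner_stdGaussian (z : E) :
    ∫ g, ⟪z, g⟫ ∂(ProbabilityTheory.stdGaussian E) = 0 :=
  integral_strongDual_stdGaussian (innerSL ℝ z)

theorem map_inner_stdGaussian (z : E) :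
    (ProbabilityTheory.stdGaussian E).map (fun g ↦ ⟪z, g⟫) = gaussianReal 0 (‖z‖₊ ^ 2) := by
  have h := IsGaussian.map_eq_gaussianReal (μ := ProbabilityTheory.stdGaussian E) (innerSL ℝ z)
  rw [integral_strongDual_stdGaussian, variance_dual_stdGaussian, innerSL_apply_norm] at h
  rwa [Real.toNNReal_pow (norm_nonneg z), norm_toNNReal] at h

theorem eq_zero_of_ae_inner_stdGaussian_eq_zero {z : E}
    (hz : ∀ᵐ g ∂(ProbabilityTheory.stdGaussian E), ⟪z, g⟫ = 0) : z = 0 := by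
  have hvar : Var[innerSL ℝ z; ProbabilityTheory.stdGaussian E] = 0 := by
    rw [variance_congr (X := innerSL ℝ z) (Y := 0) hz, variance_zero]
  rwa [variance_dual_stdGaussian, innerSL_apply_norm, sq_eq_zero_iff, norm_eq_zero] at hvar

/-- The Gaussian width `E sup_j ⟪s j, g⟫` of a family of vectors, `g` standard Gaussian; for a
simplex coding this is `λ(q)`. -/
noncomputable def gaussianWidth (s : ι → E) : ℝ :=
  ∫ g, supportFunction s g ∂(ProbabilityTheory.stdGaussian E)

theorem gaussianWidth_pos (hs : Bornology.IsBounded (Set.range s))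
    (hs' : (Set.range s).Nontrivial) : 0 < gaussianWidth s := by
  obtain ⟨_, ⟨i, rfl⟩, _, ⟨j, rfl⟩, hij⟩ := hs'
  have : Nonempty ι := ⟨i⟩
  have integrable_sup : Integrable (supportFunction s) (ProbabilityTheory.stdGaussian E) :=
    integrable_supportFunction_comp hs IsGaussian.integrable_id
  have integrable_inner (k : ι) : Integrable (fun g ↦ ⟪s k, g⟫) (ProbabilityTheory.stdGaussian E) :=
    IsGaussian.integrable_fun_id.const_inner (s k)
  have integral_sub_eq (k : ι) :
      ∫ g, supportFunction s g - ⟪s k, g⟫ ∂(ProbabilityTheory.stdGaussian E) = gaussianWidth s := by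
    rw [integral_sub integrable_sup (integrable_inner k), integral_inner_stdGaussian,
      sub_zero, gaussianWidth]
  have inner_le (k : ι) : 0 ≤ fun g ↦ supportFunction s g - ⟪s k, g⟫ :=
    fun g ↦ sub_nonneg.2 (inner_le_supportFunction hs k g)
  have width_nonneg : 0 ≤ gaussianWidth s := integral_sub_eq i ▸ integral_nonneg (inner_le i)
  refine width_nonneg.lt_of_ne' fun hzero ↦ hij ?_
  have ae_eq (k : ι) :
      (fun g ↦ supportFunction s g - ⟪s k, g⟫) =ᵐ[ProbabilityTheory.stdGaussian E] 0 :=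
    (integral_eq_zero_iff_of_nonneg (inner_le k) (integrable_sup.sub (integrable_inner k))).1
      ((integral_sub_eq k).trans hzero)
  refine sub_eq_zero.1 (eq_zero_of_ae_inner_stdGaussian_eq_zero ?_)
  filter_upwards [ae_eq i, ae_eq j] with g hi hj
  simp only [Pi.zero_apply] at hi hj
  rw [inner_sub_left]
  linarith

end GaussianWidth

section GaussianMatrix

variable {n d : ℕ}

theorem stdGaussian_eq_stdGaussian_euclideanSpace (n : ℕ) :
    _root_.stdGaussian n = ProbabilityTheory.stdGaussian (EuclideanSpace ℝ (Fin n)) :=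
  map_pi_eq_stdGaussian

theorem isLinearMap_act (W : Fin n → Fin d → ℝ) : IsLinearMap ℝ (act W) where
  map_add v w := by
    ext k
    simp [act, mul_add, Finset.sum_add_distrib]
  map_smul c v := by
    ext k
    simp [act, Finset.mul_sum, mul_left_comm]

theorem measurable_act (v : EuclideanSpace ℝ (Fin d)) :
    Measurable fun W : Fin n → Fin d → ℝ ↦ act W v :=
  (EuclideanSpace.equiv (Fin n) ℝ).symm.continuous.measurable.comp
    (by fun_prop : Measurable fun (W : Fin n → Fin d → ℝ) k ↦ ∑ j, W k j * v j)

theorem map_sum_mul_pi_gaussianReal {κ : Type*} [Fintype κ] (v : EuclideanSpace ℝ κ) :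
    (Measure.pi fun _ : κ ↦ gaussianReal 0 1).map (fun w ↦ ∑ j, w j * v j) =
      gaussianReal 0 (‖v‖₊ ^ 2) := by
  rw [← map_inner_stdGaussian, ← map_pi_eq_stdGaussian, Measure.map_map (by fun_prop) (by fun_prop)]
  rfl

theorem map_const_mul_pi_gaussianReal {κ : Type*} [Fintype κ] (r : NNReal) :
    (Measure.pi fun _ : κ ↦ gaussianReal 0 1).map (fun w k ↦ (r : ℝ) * w k) =
      Measure.pi fun _ ↦ gaussianReal 0 (r ^ 2) := by
  have map_mul : (gaussianReal 0 1).map ((r : ℝ) * ·) = gaussianReal 0 (r ^ 2) := by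
    rw [gaussianReal_map_const_mul, mul_zero, mul_one]
    rfl
  have : IsProbabilityMeasure ((gaussianReal 0 1).map ((r : ℝ) * ·)) := map_mul ▸ inferInstance
  rw [Measure.pi_map_pi fun _ ↦ by fun_prop, map_mul]

theorem map_rows_stdGaussianMatrix (v : EuclideanSpace ℝ (Fin d)) :
    (stdGaussianMatrix n d).map (fun W k ↦ ∑ j, W k j * v j) =
      Measure.pi fun _ ↦ gaussianReal 0 (‖v‖₊ ^ 2) := by
  have : IsProbabilityMeasure ((Measure.pi fun _ : Fin d ↦ gaussianReal 0 1).map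
      fun w ↦ ∑ j, w j * v j) := map_sum_mul_pi_gaussianReal v ▸ inferInstance
  rw [stdGaussianMatrix, Measure.pi_map_pi (f := fun _ (w : Fin d → ℝ) ↦ ∑ j, w j * v j)
    fun _ ↦ Measurable.aemeasurable (by fun_prop), map_sum_mul_pi_gaussianReal]

theorem map_act_stdGaussianMatrix (v : EuclideanSpace ℝ (Fin d)) :
    (stdGaussianMatrix n d).map (fun W ↦ act W v) =
      (ProbabilityTheory.stdGaussian (EuclideanSpace ℝ (Fin n))).map (fun g ↦ ‖v‖ • g) := by
  calc (stdGaussianMatrix n d).map (fun W ↦ act W v)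
    _ = ((stdGaussianMatrix n d).map (fun W k ↦ ∑ j, W k j * v j)).map (WithLp.toLp 2) :=
        (Measure.map_map (by fun_prop) (by fun_prop)).symm
    _ = ((Measure.pi fun _ ↦ gaussianReal 0 1).map (fun w k ↦ ‖v‖ * w k)).map (WithLp.toLp 2) := by
        rw [map_rows_stdGaussianMatrix, ← map_const_mul_pi_gaussianReal, coe_nnnorm]
    _ = ((Measure.pi fun _ ↦ gaussianReal 0 1).map (WithLp.toLp 2)).map (fun g ↦ ‖v‖ • g) := by
        rw [Measure.map_map (by fun_prop) (by fun_prop),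
          Measure.map_map (by fun_prop) (by fun_prop)]
        rfl
    _ = _ := by rw [map_pi_eq_stdGaussian]

theorem integrable_act (v : EuclideanSpace ℝ (Fin d)) :
    Integrable (fun W ↦ act W v) (stdGaussianMatrix n d) := by
  have h : Integrable id ((stdGaussianMatrix n d).map fun W ↦ act W v) := by
    rw [map_act_stdGaussianMatrix]
    exact (integrable_map_measure (by fun_prop) (by fun_prop)).2
      (IsGaussian.integrable_fun_id.smul ‖v‖)
  exact h.comp_measurable (measurable_act v)

theorem integral_supportFunction_act {ι : Type*} [Nonempty ι] {s : ι → EuclideanSpace ℝ (Fin n)}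
    (hs : Bornology.IsBounded (Set.range s)) (v : EuclideanSpace ℝ (Fin d)) :
    ∫ W, supportFunction s (act W v) ∂(stdGaussianMatrix n d) = gaussianWidth s * ‖v‖ := by
  have hmeas (μ : Measure (EuclideanSpace ℝ (Fin n))) :
      AEStronglyMeasurable (supportFunction s) μ :=
    (continuous_supportFunction hs).aestronglyMeasurable
  rw [← integral_map (measurable_act v).aemeasurable (hmeas _), map_act_stdGaussianMatrix,
    integral_map (by fun_prop) (hmeas _)]
  simp only [supportFunction_smul_of_nonneg s (norm_nonneg v), integral_const_mul, gaussianWidth]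
  ring

end GaussianMatrix

section ExpectedCorrelation

variable {n d : ℕ}

/-- The expected correlation `E ⟪c W, W v⟫` of a random codeword `c W` with the image of `v`, for a
Gaussian matrix `W`. For `c W = s (Q_W x)` it is the functional `E_x(v)` of the paper. -/
noncomputable def expectedCorrelation (c : (Fin n → Fin d → ℝ) → EuclideanSpace ℝ (Fin n))
    (v : EuclideanSpace ℝ (Fin d)) : ℝ :=
  ∫ W, ⟪c W, act W v⟫ ∂(stdGaussianMatrix n d)

section BoundedCodeword

variable {c : (Fin n → Fin d → ℝ) → EuclideanSpace ℝ (Fin n)}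

theorem integrable_inner_act (hc : Measurable c) (hbdd : Bornology.IsBounded (Set.range c))
    (v : EuclideanSpace ℝ (Fin d)) :
    Integrable (fun W ↦ ⟪c W, act W v⟫) (stdGaussianMatrix n d) := by
  obtain ⟨C, hC⟩ := hbdd.exists_norm_le
  refine ((integrable_act v).norm.const_mul C).mono'
    (hc.inner (measurable_act v)).aestronglyMeasurable (.of_forall fun W ↦ ?_)
  grw [norm_inner_le_norm, hC _ ⟨W, rfl⟩]

theorem isLinearMap_expectedCorrelation (hc : Measurable c)
    (hbdd : Bornology.IsBounded (Set.range c)) : IsLinearMap ℝ (expectedCorrelation c) where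
  map_add v w := by
    simp only [expectedCorrelation, (isLinearMap_act _).map_add, inner_add_right]
    exact integral_add (integrable_inner_act hc hbdd v) (integrable_inner_act hc hbdd w)
  map_smul r v := by
    simp only [expectedCorrelation, (isLinearMap_act _).map_smul, inner_smul_right, smul_eq_mul,
      integral_const_mul]

end BoundedCodeword

variable {ι : Type*} {s : ι → EuclideanSpace ℝ (Fin n)} {Q : (Fin n → Fin d → ℝ) → ι}

theorem expectedCorrelation_le_gaussianWidth_mul_norm
    (hs : Bornology.IsBounded (Set.range s)) (hQ : Measurable (s ∘ Q))
    (v : EuclideanSpace ℝ (Fin d)) :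
    expectedCorrelation (s ∘ Q) v ≤ gaussianWidth s * ‖v‖ := by
  have : Nonempty ι := ⟨Q 0⟩
  rw [← integral_supportFunction_act hs]
  exact integral_mono (integrable_inner_act hQ (hs.subset (Set.range_comp_subset_range Q s)) v)
    (integrable_supportFunction_comp hs (integrable_act v))
    fun W ↦ inner_le_supportFunction hs (Q W) (act W v)

theorem expectedCorrelation_eq_gaussianWidth_mul_norm
    (hs : Bornology.IsBounded (Set.range s)) {x : EuclideanSpace ℝ (Fin d)}
    (hmax : ∀ W j, ⟪s j, act W x⟫ ≤ ⟪s (Q W), act W x⟫) :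
    expectedCorrelation (s ∘ Q) x = gaussianWidth s * ‖x‖ := by
  have : Nonempty ι := ⟨Q 0⟩
  simp only [← integral_supportFunction_act hs, expectedCorrelation, Function.comp_apply,
    supportFunction_eq_inner hs (hmax _)]

theorem expectedCorrelation_eq_gaussianWidth_mul_inner
    (hs : Bornology.IsBounded (Set.range s)) (hQ : Measurable (s ∘ Q))
    {x : EuclideanSpace ℝ (Fin d)} (hx : ‖x‖ = 1)
    (hmax : ∀ W j, ⟪s j, act W x⟫ ≤ ⟪s (Q W), act W x⟫) (v : EuclideanSpace ℝ (Fin d)) :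
    expectedCorrelation (s ∘ Q) v = gaussianWidth s * ⟪x, v⟫ :=
  eq_mul_inner_of_le_mul_norm
    (isLinearMap_expectedCorrelation hQ (hs.subset (Set.range_comp_subset_range Q s)))
    (expectedCorrelation_le_gaussianWidth_mul_norm hs hQ) hx
    (by rw [expectedCorrelation_eq_gaussianWidth_mul_norm hs hmax, hx, mul_one]) v

end ExpectedCorrelation

theorem qary_excess_risk_bound_general {ι : Type*} {n d : ℕ} {s : ι → EuclideanSpace ℝ (Fin n)}
    (hs : Bornology.IsBounded (Set.range s)) (hs' : (Set.range s).Nontrivial)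
    {x : EuclideanSpace ℝ (Fin d)} (hx : ‖x‖ = 1)
    {Q : (Fin n → Fin d → ℝ) → ι} (hQmeas : Measurable (s ∘ Q))
    (hQ : ∀ W j, ⟪s j, act W x⟫ ≤ ⟪s (Q W), act W x⟫)
    {u : EuclideanSpace ℝ (Fin d)} (hu : ‖u‖ ≤ 1) :
    1 / 2 * ‖u - x‖ ^ 2 ≤ 1 / gaussianWidth s *
      (expectedCorrelation (s ∘ Q) x - expectedCorrelation (s ∘ Q) u) := by
  have hpos : 0 < gaussianWidth s := gaussianWidth_pos hs hs'
  calc 1 / 2 * ‖u - x‖ ^ 2 ≤ 1 - ⟪x, u⟫ := half_norm_sub_sq_le_one_sub_inner hx hu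
    _ = 1 / gaussianWidth s *
        (expectedCorrelation (s ∘ Q) x - expectedCorrelation (s ∘ Q) u) := by
      simp only [expectedCorrelation_eq_gaussianWidth_mul_inner hs hQmeas hx hQ,
        real_inner_self_eq_norm_sq, hx]
      field_simp

section SimplexCoding

variable {q : ℕ} {s : Fin q → EuclideanSpace ℝ (Fin (q - 1))}

theorem lambdaQ_eq_gaussianWidth (s : Fin q → EuclideanSpace ℝ (Fin (q - 1))) :
    lambdaQ s = gaussianWidth s := by
  rw [lambdaQ, stdGaussian_eq_stdGaussian_euclideanSpace]
  rfl

theorem IsSimplexCoding.nontrivial_range (hs : IsSimplexCoding s) (hq : 2 ≤ q) :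
    (Set.range s).Nontrivial := by
  obtain ⟨norm_eq_one, -, sum_eq_zero⟩ := hs
  let j₀ : Fin q := ⟨0, by omega⟩
  by_contra hsub
  have hconst (j : Fin q) : s j = s j₀ :=
    Set.not_nontrivial_iff.1 hsub ⟨j, rfl⟩ ⟨j₀, rfl⟩
  simp only [hconst, Finset.sum_const, Finset.card_univ, Fintype.card_fin] at sum_eq_zero
  rw [← Nat.cast_smul_eq_nsmul ℝ] at sum_eq_zero
  have hzero : s j₀ = 0 := (smul_eq_zero_iff_right (by positivity)).1 sum_eq_zero
  simpa [hzero] using norm_eq_one j₀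

end SimplexCoding

/-- For `‖x‖ = 1` and `E_x(u) = E_W ⟪s (Q_W x), W u⟫`, every `u` in the unit
ball satisfies `(1/2) ‖u - x‖² ≤ (1/λ(q)) (E_x(x) - E_x(u))`. -/
theorem qary_excess_risk_bound
    (q d : ℕ) (hq : 2 ≤ q)
    (s : Fin q → EuclideanSpace ℝ (Fin (q - 1))) (hs : IsSimplexCoding s)
    (x : EuclideanSpace ℝ (Fin d)) (hx : ‖x‖ = 1)
    (Q : (Fin (q - 1) → Fin d → ℝ) → Fin q) (hQmeas : Measurable Q)
    (hQ : ∀ W j, ⟪s j, act W x⟫ ≤ ⟪s (Q W), act W x⟫)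
    (Ex : EuclideanSpace ℝ (Fin d) → ℝ)
    (hEx : ∀ u, Ex u = ∫ W, ⟪s (Q W), act W u⟫ ∂(stdGaussianMatrix (q - 1) d))
    (u : EuclideanSpace ℝ (Fin d)) (hu : ‖u‖ ≤ 1) :
    (1 / 2) * ‖u - x‖ ^ 2 ≤ (1 / lambdaQ s) * (Ex x - Ex u) := by
  simpa only [hEx, lambdaQ_eq_gaussianWidth, expectedCorrelation, Function.comp_apply] using
    qary_excess_risk_bound_general (Set.finite_range s).isBounded (hs.nontrivial_range hq) hx
      ((measurable_of_finite s).comp hQmeas) hQ hu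
end

section
/- There exists a universal constant C > 0 such that the following holds for every integer q ≥ 2 and every σ > 0. Let s_0, …, s_{q−1} be a simplex coding in ℝ^{q−1}, let g ~ N(0, I_{q−1}), let h_0, …, h_{q−1} be i.i.d. N(0, σ^2) random variables independent of g, and let γ̄ = argmax_{j=0,…,q−1} ( ⟨s_j, g⟩ + h_j ). Then E ⟨s_{γ̄}, g⟩ ≥ C √( log q / (1 + σ^2) ). -/
open MeasureTheory ProbabilityTheory
open scoped RealInnerProductSpace ENNReal Pointwise

/-!
The expected maximum of a centered Gaussian vector depends only on the variances of its increments: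
the maximum is one coordinate plus the maximum of the increments from that coordinate, and
polarization recovers the covariances of those increments. For a simplex coding all increments of
`⟪s_j, g⟫` have the same variance `2a`, where `a = q / (q - 1)`, just as those of an i.i.d.
`N(0, a)` vector. Hence, if `m` is the expected maximum of `q` i.i.d. `N(0, 1)` variables and
`v = σ²`,

  `E ⟪s_γ, g⟫ = E max_j (⟪s_j, g⟫ + h_j) - E h_γ ≥ √(a + v) m - √v m ≥ a m / (2 √(a + v))`.

For `m ≳ √(log q)`, apply Markov's inequality to `max_j x_j - x_{i₀}`: with probability bounded
below, `x_{i₀} ≤ 0` while some other coordinate exceeds `√(log q)`.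
-/

section FiniteFamilies

variable {ι Ω : Type*} [MeasurableSpace Ω] {P : Measure Ω} {X : Ω → ι → ℝ}

lemma integrable_apply_of_measurable [Finite ι] [MeasurableSpace ι] [MeasurableSingletonClass ι]
    {γ : Ω → ι} (hX : ∀ i, Integrable (fun ω => X ω i) P) (hγ : Measurable γ) :
    Integrable (fun ω => X ω (γ ω)) P := by
  classical
  have := Fintype.ofFinite ι
  have decomposition : (fun ω => X ω (γ ω)) =
      fun ω => ∑ i, (γ ⁻¹' {i}).indicator (fun ω => X ω i) ω := by
    funext ω
    simp [Set.indicator_apply]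
  rw [decomposition]
  exact integrable_finsetSum _ fun i _ => (hX i).indicator (hγ (measurableSet_singleton i))

lemma integrable_iSup [Finite ι] (hX : ∀ i, Integrable (fun ω => X ω i) P) :
    Integrable (fun ω => ⨆ i, X ω i) P := by
  have := Fintype.ofFinite ι
  refine (integrable_finsetSum Finset.univ fun i _ => (hX i).abs).mono'
    (AEMeasurable.iSup fun i => (hX i).aemeasurable).aestronglyMeasurable (ae_of_all _ fun ω => ?_)
  cases isEmpty_or_nonempty ι
  · simp [Real.iSup_of_isEmpty]
  · obtain ⟨i, hi⟩ := exists_eq_ciSup_of_finite (f := X ω)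
    rw [← hi, Real.norm_eq_abs]
    exact Finset.single_le_sum (f := fun i => |X ω i|) (fun _ _ => abs_nonneg _) (Finset.mem_univ i)

end FiniteFamilies

section Gaussian

variable {ι Ω Ω' : Type*} [MeasurableSpace Ω] [MeasurableSpace Ω']
  {P : Measure Ω} {P' : Measure Ω'} {X : Ω → ι → ℝ} {Y : Ω' → ι → ℝ}

lemma exists_strongDual_apply_eq_sum [Fintype ι] (L : StrongDual ℝ (ι → ℝ)) :
    ∃ c : ι → ℝ, ∀ x, L x = ∑ i, c i * x i := by
  classical
  refine ⟨fun i => L fun j => if i = j then 1 else 0, fun x => ?_⟩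
  exact (L.toLinearMap.pi_apply_eq_sum_univ x).trans
    (Finset.sum_congr rfl fun _ _ => mul_comm _ _)

lemma map_eq_map_of_covariance_eq [Finite ι] (hX : HasGaussianLaw X P) (hY : HasGaussianLaw Y P')
    (mean_eq : ∀ i, ∫ ω, X ω i ∂P = ∫ ω, Y ω i ∂P')
    (cov_eq : ∀ i j, cov[fun ω => X ω i, fun ω => X ω j; P] =
      cov[fun ω => Y ω i, fun ω => Y ω j; P']) :
    P.map X = P'.map Y := by
  classical
  have := Fintype.ofFinite ι
  have := hX.isProbabilityMeasure
  have := hY.isProbabilityMeasure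
  have := hX.isGaussian_map
  have := hY.isGaussian_map
  refine Measure.ext_of_charFunDual (funext fun L => ?_)
  obtain ⟨c, L_apply⟩ := exists_strongDual_apply_eq_sum L
  have L_mean_eq : ∫ ω, L (X ω) ∂P = ∫ ω, L (Y ω) ∂P' := by
    simp_rw [L_apply]
    rw [integral_finsetSum _ fun i _ => (hX.eval i).integrable.const_mul _,
      integral_finsetSum _ fun i _ => (hY.eval i).integrable.const_mul _]
    simp_rw [integral_const_mul, mean_eq]
  have L_variance_eq : Var[fun ω => L (X ω); P] = Var[fun ω => L (Y ω); P'] := by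
    simp_rw [L_apply]
    rw [variance_fun_sum fun i => (hX.eval i).memLp_two.const_mul _,
      variance_fun_sum fun i => (hY.eval i).memLp_two.const_mul _]
    simp_rw [covariance_const_mul_left, covariance_const_mul_right, cov_eq]
  rw [hX.charFunDual_map_eq_fun, hY.charFunDual_map_eq_fun, L_mean_eq, L_variance_eq]

lemma covariance_sub_sub_eq_variance [IsFiniteMeasure P] {U V W : Ω → ℝ} (hU : MemLp U 2 P)
    (hV : MemLp V 2 P) (hW : MemLp W 2 P) :
    cov[fun ω => U ω - W ω, fun ω => V ω - W ω; P] =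
      (Var[fun ω => U ω - W ω; P] + Var[fun ω => V ω - W ω; P]
        - Var[fun ω => U ω - V ω; P]) / 2 := by
  have polarization := variance_fun_sub (hU.sub hW) (hV.sub hW)
  simp only [Pi.sub_apply, sub_sub_sub_cancel_right] at polarization
  rw [polarization]
  simp only [Pi.sub_def]
  ring

lemma integral_iSup_eq_integral_iSup_sub_add [Finite ι]
    (hX : ∀ i, Integrable (fun ω => X ω i) P) (i₀ : ι) :
    ∫ ω, ⨆ i, X ω i ∂P = ∫ ω, (⨆ i, (X ω i - X ω i₀)) ∂P + ∫ ω, X ω i₀ ∂P := by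
  have := Nonempty.intro i₀
  have increments_integrable : Integrable (fun ω => ⨆ i, (X ω i - X ω i₀)) P :=
    integrable_iSup (X := fun ω i => X ω i - X ω i₀) fun i => (hX i).sub (hX i₀)
  rw [← integral_add increments_integrable (hX i₀)]
  refine integral_congr_ae (ae_of_all _ fun ω => ?_)
  simp only
  rw [← ciSup_sub (Set.finite_range _).bddAbove, sub_add_cancel]

lemma integral_iSup_eq_of_variance_sub_eq [Finite ι] [Nonempty ι]
    (hX : HasGaussianLaw X P) (hY : HasGaussianLaw Y P')
    (mean_eq : ∀ i, ∫ ω, X ω i ∂P = ∫ ω, Y ω i ∂P')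
    (variance_eq : ∀ i j, Var[fun ω => X ω i - X ω j; P] = Var[fun ω => Y ω i - Y ω j; P']) :
    ∫ ω, ⨆ i, X ω i ∂P = ∫ ω, ⨆ i, Y ω i ∂P' := by
  have := Fintype.ofFinite ι
  have := hX.isProbabilityMeasure
  have := hY.isProbabilityMeasure
  let i₀ := Classical.arbitrary ι
  let increments : (ι → ℝ) →L[ℝ] ι → ℝ :=
    .pi fun i => .proj (R := ℝ) i - .proj i₀
  have law_eq : P.map (fun ω => increments (X ω)) = P'.map (fun ω => increments (Y ω)) := by
    refine map_eq_map_of_covariance_eq (hX.map_fun increments) (hY.map_fun increments)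
      (fun i => ?_) (fun i j => ?_)
    · change ∫ ω, X ω i - X ω i₀ ∂P = ∫ ω, Y ω i - Y ω i₀ ∂P'
      rw [integral_sub (hX.eval i).integrable (hX.eval i₀).integrable,
        integral_sub (hY.eval i).integrable (hY.eval i₀).integrable, mean_eq, mean_eq]
    · change cov[fun ω => X ω i - X ω i₀, fun ω => X ω j - X ω i₀; P] =
        cov[fun ω => Y ω i - Y ω i₀, fun ω => Y ω j - Y ω i₀; P']
      rw [covariance_sub_sub_eq_variance (hX.eval i).memLp_two (hX.eval j).memLp_two
          (hX.eval i₀).memLp_two,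
        covariance_sub_sub_eq_variance (hY.eval i).memLp_two (hY.eval j).memLp_two
          (hY.eval i₀).memLp_two]
      simp only [variance_eq]
  have measurable_max : Measurable fun x : ι → ℝ => ⨆ i, x i := .iSup fun i => measurable_pi_apply i
  rw [integral_iSup_eq_integral_iSup_sub_add (fun i => (hX.eval i).integrable) i₀,
    integral_iSup_eq_integral_iSup_sub_add (fun i => (hY.eval i).integrable) i₀, mean_eq]
  congr 1
  calc ∫ ω, (⨆ i, (X ω i - X ω i₀)) ∂P
      = ∫ x, ⨆ i, x i ∂(P.map fun ω => increments (X ω)) :=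
        (integral_map (hX.map_fun increments).aemeasurable
          measurable_max.aestronglyMeasurable).symm
    _ = ∫ x, ⨆ i, x i ∂(P'.map fun ω => increments (Y ω)) := by rw [law_eq]
    _ = ∫ ω, (⨆ i, (Y ω i - Y ω i₀)) ∂P' :=
        integral_map (hY.map_fun increments).aemeasurable measurable_max.aestronglyMeasurable

end Gaussian

section EquidistantGaussian

open scoped NNReal

/-- The expected maximum of a standard Gaussian vector indexed by `ι`. -/
noncomputable def gaussianMax (ι : Type*) [Fintype ι] : ℝ :=
  ∫ x : ι → ℝ, ⨆ i, x i ∂Measure.pi fun _ => gaussianReal 0 1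

/-- A centered Gaussian vector whose increments `X i - X j`, `i ≠ j`, all have variance `2 * v`. The
factor `2` makes i.i.d. `N(0, v)` coordinates equidistant with parameter `v`. -/
structure IsEquidistantGaussian {ι Ω : Type*} [MeasurableSpace Ω] (X : Ω → ι → ℝ) (v : ℝ≥0)
    (P : Measure Ω) : Prop where
  hasGaussianLaw : HasGaussianLaw X P
  integral_eq_zero (i : ι) : ∫ ω, X ω i ∂P = 0
  variance_sub {i j : ι} (hij : i ≠ j) : Var[fun ω => X ω i - X ω j; P] = 2 * v

namespace IsEquidistantGaussian

variable {ι Ω : Type*} [MeasurableSpace Ω] {P : Measure Ω} {X Y : Ω → ι → ℝ} {v w : ℝ≥0}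

lemma of_hasLaw_pi [Fintype ι] (hX : HasLaw X (Measure.pi fun _ => gaussianReal 0 v) P) :
    IsEquidistantGaussian X v P := by
  have := hX.isProbabilityMeasure
  have eval_law (i : ι) : HasLaw (fun ω => X ω i) (gaussianReal 0 v) P :=
    (measurePreserving_eval (fun _ : ι => gaussianReal 0 v) i).hasLaw.fun_comp hX
  have indep : iIndepFun (fun i ω => X ω i) P :=
    (iIndepFun_iff_hasLaw_pi_pi eval_law).2 hX
  refine ⟨indep.hasGaussianLaw fun i => (eval_law i).hasGaussianLaw, fun i => ?_,
    fun {i j} hij => ?_⟩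
  · rw [(eval_law i).integral_eq, integral_id_gaussianReal]
  · have memLp (i : ι) := (eval_law i).hasGaussianLaw.memLp_two
    rw [variance_fun_sub (memLp i) (memLp j),
      (indep.indepFun hij).covariance_eq_zero (memLp i) (memLp j), (eval_law i).variance_eq,
      (eval_law j).variance_eq, variance_id_gaussianReal]
    ring

lemma of_hasLaw_stdGaussian [Finite ι] {n : ℕ} {s : ι → EuclideanSpace ℝ (Fin n)}
    {g : Ω → EuclideanSpace ℝ (Fin n)} (hg : HasLaw g (stdGaussian n) P)
    (norm_sub_sq : ∀ i j, i ≠ j → ‖s i - s j‖ ^ 2 = 2 * v) :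
    IsEquidistantGaussian (fun ω i => ⟪s i, g ω⟫) v P := by
  have := Fintype.ofFinite ι
  replace hg : HasLaw g (ProbabilityTheory.stdGaussian (EuclideanSpace ℝ (Fin n))) P :=
    map_pi_eq_stdGaussian (ι := Fin n) ▸ hg
  let evaluations : EuclideanSpace ℝ (Fin n) →L[ℝ] ι → ℝ := .pi fun i => innerSL ℝ (s i)
  refine ⟨hg.hasGaussianLaw.map_fun evaluations, fun i => ?_, fun {i j} hij => ?_⟩
  · exact (hg.integral_comp (innerSL ℝ (s i)).continuous.aestronglyMeasurable).trans
      (integral_strongDual_stdGaussian _)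
  · rw [← norm_sub_sq i j hij, ← innerSL_apply_norm ℝ, ← variance_dual_stdGaussian, ← hg.map_eq,
      variance_map (innerSL ℝ (s i - s j)).continuous.aemeasurable hg.aemeasurable]
    simp only [Function.comp_def, innerSL_apply_apply, inner_sub_left]

lemma integrable [Finite ι] (hX : IsEquidistantGaussian X v P) (i : ι) :
    Integrable (fun ω => X ω i) P :=
  have := Fintype.ofFinite ι
  (hX.hasGaussianLaw.eval i).integrable

lemma memLp_two_sub [Finite ι] (hX : IsEquidistantGaussian X v P) (i j : ι) :
    MemLp (fun ω => X ω i - X ω j) 2 P :=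
  have := Fintype.ofFinite ι
  (hX.hasGaussianLaw.eval i).memLp_two.sub (hX.hasGaussianLaw.eval j).memLp_two

lemma add [Finite ι] (hX : IsEquidistantGaussian X v P) (hY : IsEquidistantGaussian Y w P)
    (indep : X ⟂ᵢ[P] Y) :
    IsEquidistantGaussian (fun ω i => X ω i + Y ω i) (v + w) P := by
  have := Fintype.ofFinite ι
  refine ⟨(indep.hasGaussianLaw hX.hasGaussianLaw hY.hasGaussianLaw).fun_add, fun i => ?_,
    fun {i j} hij => ?_⟩
  · rw [integral_add (hX.integrable i) (hY.integrable i), hX.integral_eq_zero,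
      hY.integral_eq_zero, add_zero]
  · have increment_measurable : Measurable fun x : ι → ℝ => x i - x j := by fun_prop
    have increments_indep : (fun ω => X ω i - X ω j) ⟂ᵢ[P] fun ω => Y ω i - Y ω j :=
      indep.comp increment_measurable increment_measurable
    simp_rw [add_sub_add_comm]
    rw [increments_indep.variance_fun_add (hX.memLp_two_sub i j) (hY.memLp_two_sub i j),
      hX.variance_sub hij, hY.variance_sub hij, NNReal.coe_add, mul_add]

lemma const_mul [Finite ι] (hX : IsEquidistantGaussian X v P) (c : ℝ≥0) :
    IsEquidistantGaussian (fun ω i => c * X ω i) (c ^ 2 * v) P := by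
  have := Fintype.ofFinite ι
  refine ⟨hX.hasGaussianLaw.fun_smul c, fun i => ?_, fun {i j} hij => ?_⟩
  · rw [integral_const_mul, hX.integral_eq_zero, mul_zero]
  · simp_rw [← mul_sub]
    rw [variance_const_mul, hX.variance_sub hij, NNReal.coe_mul, NNReal.coe_pow, mul_left_comm]

lemma integral_iSup_eq [Finite ι] [Nonempty ι] {Ω' : Type*} [MeasurableSpace Ω'] {P' : Measure Ω'}
    {Y : Ω' → ι → ℝ} (hX : IsEquidistantGaussian X v P) (hY : IsEquidistantGaussian Y v P') :
    ∫ ω, ⨆ i, X ω i ∂P = ∫ ω, ⨆ i, Y ω i ∂P' := by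
  have := hX.hasGaussianLaw.isProbabilityMeasure
  have := hY.hasGaussianLaw.isProbabilityMeasure
  refine integral_iSup_eq_of_variance_sub_eq hX.hasGaussianLaw hY.hasGaussianLaw
    (fun i => by rw [hX.integral_eq_zero, hY.integral_eq_zero]) fun i j => ?_
  obtain rfl | hij := eq_or_ne i j
  · simp only [sub_self, ← Pi.zero_def, variance_zero]
  · rw [hX.variance_sub hij, hY.variance_sub hij]

lemma integral_iSup [Fintype ι] [Nonempty ι] (hX : IsEquidistantGaussian X v P) :
    ∫ ω, ⨆ i, X ω i ∂P = √v * gaussianMax ι := by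
  have standard : IsEquidistantGaussian (fun x : ι → ℝ => x) 1
      (Measure.pi fun _ => gaussianReal 0 1) := of_hasLaw_pi .id
  have scaled := standard.const_mul (NNReal.sqrt v)
  rw [NNReal.sq_sqrt, mul_one] at scaled
  rw [hX.integral_iSup_eq scaled, gaussianMax, ← integral_const_mul]
  simp_rw [Real.coe_sqrt, Real.mul_iSup_of_nonneg (Real.sqrt_nonneg v)]

end IsEquidistantGaussian

end EquidistantGaussian

section LowerBound

open Set

section PiMeasure

variable {ι : Type*} [Fintype ι]

lemma measureReal_pi_univ_pi_update {α : Type*} [MeasurableSpace α] [DecidableEq ι] (ν : Measure α)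
    [SigmaFinite ν] (A B : Set α) (i : ι) :
    (Measure.pi fun _ : ι => ν).real (univ.pi (Function.update (fun _ => B) i A)) =
      ν.real A * ν.real B ^ (Fintype.card ι - 1) := by
  rw [measureReal_def, Measure.pi_pi, ENNReal.toReal_prod]
  simp only [← measureReal_def, ← Function.comp_apply (f := ν.real),
    Function.comp_update, Finset.prod_update_of_mem (Finset.mem_univ i)]
  simp [Finset.card_sdiff]

lemma measureReal_pi_mem_and_exists_notMem {α : Type*} [MeasurableSpace α] (ν : Measure α)
    [IsProbabilityMeasure ν] {A B : Set α} (hA : MeasurableSet A) (hB : MeasurableSet B)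
    (i : ι) :
    (Measure.pi fun _ : ι => ν).real {x | x i ∈ A ∧ ∃ j ≠ i, x j ∉ B} =
      ν.real A * (1 - ν.real B ^ (Fintype.card ι - 1)) := by
  classical
  let box (B : Set α) : Set (ι → α) := univ.pi (Function.update (fun _ => B) i A)
  have mem_box (B : Set α) (x : ι → α) : x ∈ box B ↔ x i ∈ A ∧ ∀ j ≠ i, x j ∈ B := by
    constructor
    · exact fun hx => ⟨by simpa using hx i trivial, fun j hj => by simpa [hj] using hx j trivial⟩
    · rintro ⟨hi, hx⟩ j -
      obtain rfl | hj := eq_or_ne j i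
      · simpa using hi
      · simpa [hj] using hx j hj
  have eq_sdiff : {x : ι → α | x i ∈ A ∧ ∃ j ≠ i, x j ∉ B} = box univ \ box B := by
    ext x
    simp only [mem_sdiff, mem_box, mem_univ]
    grind
  have measurable_box : MeasurableSet (box B) := by
    refine .univ_pi fun j => ?_
    obtain rfl | hj := eq_or_ne j i
    · simpa using hA
    · simpa [hj] using hB
  rw [eq_sdiff, measureReal_sdiff _ measurable_box, measureReal_pi_univ_pi_update,
    measureReal_pi_univ_pi_update]
  · simp [mul_sub]
  · exact fun x => by simp +contextual [mem_box]

lemma mul_measureReal_le_integral_iSup_sub_integral [Nonempty ι] {ν : Measure ℝ}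
    [IsProbabilityMeasure ν] (hν : Integrable id ν) (b : ℝ) {t : ℝ} (ht : 0 ≤ t) :
    t * (ν.real (Iic b) * (1 - ν.real (Iio (b + t)) ^ (Fintype.card ι - 1))) ≤
      ∫ x : ι → ℝ, ⨆ i, x i ∂(Measure.pi fun _ => ν) - ∫ y, y ∂ν := by
  let i₀ := Classical.arbitrary ι
  have coordinate_integrable (i : ι) : Integrable (fun x : ι → ℝ => x i) (Measure.pi fun _ => ν) :=
    integrable_eval hν
  have max_integrable := integrable_iSup coordinate_integrable
  have event_subset : {x : ι → ℝ | x i₀ ∈ Iic b ∧ ∃ j ≠ i₀, x j ∉ Iio (b + t)} ⊆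
      {x | t ≤ (⨆ i, x i) - x i₀} := by
    rintro x ⟨hi, j, -, hj⟩
    have := Finite.le_ciSup x j
    simp only [mem_Iic, mem_Iio, not_lt, mem_ofPred_eq] at hi hj ⊢
    linarith
  calc t * (ν.real (Iic b) * (1 - ν.real (Iio (b + t)) ^ (Fintype.card ι - 1)))
      = t * (Measure.pi fun _ => ν).real
          {x : ι → ℝ | x i₀ ∈ Iic b ∧ ∃ j ≠ i₀, x j ∉ Iio (b + t)} := by
        rw [measureReal_pi_mem_and_exists_notMem ν measurableSet_Iic measurableSet_Iio]
    _ ≤ t * (Measure.pi fun _ => ν).real {x : ι → ℝ | t ≤ (⨆ i, x i) - x i₀} := by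
        gcongr
        exact measure_ne_top _ _
    _ ≤ ∫ x : ι → ℝ, ((⨆ i, x i) - x i₀) ∂(Measure.pi fun _ => ν) :=
        mul_meas_ge_le_integral_of_nonneg
          (ae_of_all _ fun x => sub_nonneg.2 (Finite.le_ciSup x i₀))
          (max_integrable.sub (coordinate_integrable i₀)) t
    _ = _ := by
        rw [integral_sub max_integrable (coordinate_integrable i₀), integral_eval]

end PiMeasure

section GaussianTail

open scoped NNReal

lemma measureReal_gaussianReal_Iic_neg (v : ℝ≥0) (t : ℝ) :
    (gaussianReal 0 v).real (Iic (-t)) = (gaussianReal 0 v).real (Ici t) := by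
  have symm : (gaussianReal 0 v).map (fun x => -x) = gaussianReal 0 v := by
    rw [gaussianReal_map_neg, neg_zero]
  conv_lhs => rw [← symm]
  rw [map_measureReal_apply measurable_neg measurableSet_Iic, neg_preimage, neg_Iic, neg_neg]

lemma gaussianPDFReal_add_one_le_measureReal_Ici {μ t : ℝ} {v : ℝ≥0} (hv : v ≠ 0) (ht : μ ≤ t) :
    gaussianPDFReal μ v (t + 1) ≤ (gaussianReal μ v).real (Ici t) := by
  have pdf_lower {x : ℝ} (hx : x ∈ Icc t (t + 1)) :
      gaussianPDFReal μ v (t + 1) ≤ gaussianPDFReal μ v x := by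
    unfold gaussianPDFReal
    have := hx.2
    gcongr
    linarith [hx.1]
  calc gaussianPDFReal μ v (t + 1)
      = ∫ _ in Icc t (t + 1), gaussianPDFReal μ v (t + 1) := by simp
    _ ≤ ∫ x in Icc t (t + 1), gaussianPDFReal μ v x :=
        setIntegral_mono_on (integrableOn_const (by simp))
          (integrable_gaussianPDFReal μ v).integrableOn measurableSet_Icc fun _ => pdf_lower
    _ ≤ ∫ x in Ici t, gaussianPDFReal μ v x :=
        setIntegral_mono_set (integrable_gaussianPDFReal μ v).integrableOn
          (ae_of_all _ (gaussianPDFReal_nonneg μ v)) Icc_subset_Ici_self.eventuallyLE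
    _ = (gaussianReal μ v).real (Ici t) := by
        rw [measureReal_def, gaussianReal_apply_eq_integral μ hv, ENNReal.toReal_ofReal
          (integral_nonneg (gaussianPDFReal_nonneg μ v))]

lemma half_le_measureReal_gaussianReal_Iic_zero (v : ℝ≥0) :
    1 / 2 ≤ (gaussianReal 0 v).real (Iic 0) := by
  have union : (1 : ℝ) ≤ (gaussianReal 0 v).real (Iic 0) + (gaussianReal 0 v).real (Ici 0) := by
    simpa using measureReal_union_le (μ := gaussianReal 0 v) (Iic 0) (Ici 0)
  rw [← measureReal_gaussianReal_Iic_neg, neg_zero] at union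
  linarith

lemma exists_div_le_measureReal_gaussianReal_Ici_sqrt_log :
    ∃ c : ℝ, 0 < c ∧ ∀ q : ℝ, 1 ≤ q → c / q ≤ (gaussianReal 0 1).real (Ici √(Real.log q)) := by
  refine ⟨(√(2 * Real.pi))⁻¹ * Real.exp (-1), by positivity, fun q hq => ?_⟩
  have sq_sqrt_log : √(Real.log q) ^ 2 = Real.log q := Real.sq_sqrt (Real.log_nonneg hq)
  refine le_trans ?_ (gaussianPDFReal_add_one_le_measureReal_Ici one_ne_zero (Real.sqrt_nonneg _))
  simp only [gaussianPDFReal, NNReal.coe_one, mul_one, sub_zero]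
  calc (√(2 * Real.pi))⁻¹ * Real.exp (-1) / q
      = (√(2 * Real.pi))⁻¹ * Real.exp (-1 - √(Real.log q) ^ 2) := by
        rw [sq_sqrt_log, Real.exp_sub, Real.exp_log (by linarith), mul_div_assoc]
    _ ≤ _ := by
        gcongr
        nlinarith [sq_nonneg (√(Real.log q) - 1)]

end GaussianTail

lemma one_sub_pow_pred_le_exp {c p : ℝ} {q : ℕ} (hq : 2 ≤ q) (hc : 0 ≤ c) (hp : p ≤ 1)
    (hcp : c / q ≤ p) :
    (1 - p) ^ (q - 1) ≤ Real.exp (-(c / 2)) := by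
  have two_le_q : (2 : ℝ) ≤ q := by exact_mod_cast hq
  calc (1 - p) ^ (q - 1) ≤ Real.exp (-p) ^ (q - 1) := by
        gcongr
        exact Real.one_sub_le_exp_neg p
    _ = Real.exp (-((q - 1 : ℕ) * p)) := by rw [← Real.exp_nat_mul, mul_neg]
    _ ≤ Real.exp (-(c / 2)) := by
        gcongr
        rw [Nat.cast_pred (by omega)]
        calc c / 2 ≤ (q - 1) * (c / q) := by
              rw [← mul_div_assoc, div_le_div_iff₀ two_pos (by linarith)]
              nlinarith
          _ ≤ (q - 1) * p := by
              gcongr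
              linarith

lemma exists_mul_sqrt_log_le_gaussianMax :
    ∃ c : ℝ, 0 < c ∧ ∀ (ι : Type*) [Fintype ι] [Nonempty ι],
      c * √(Real.log (Fintype.card ι)) ≤ gaussianMax ι := by
  obtain ⟨c₀, c₀_pos, tail_lower⟩ := exists_div_le_measureReal_gaussianReal_Ici_sqrt_log
  refine ⟨1 / 2 * (1 - Real.exp (-(c₀ / 2))),
    mul_pos one_half_pos (sub_pos.2 (Real.exp_lt_one_iff.2 (by linarith))), fun ι _ _ => ?_⟩
  set t := √(Real.log (Fintype.card ι))
  have markov : t * ((gaussianReal 0 1).real (Iic 0) *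
      (1 - (gaussianReal 0 1).real (Iio t) ^ (Fintype.card ι - 1))) ≤ gaussianMax ι := by
    simpa [gaussianMax, t] using mul_measureReal_le_integral_iSup_sub_integral (ι := ι)
      (ν := gaussianReal 0 1) IsGaussian.integrable_id 0 (Real.sqrt_nonneg _)
  refine le_trans ?_ markov
  obtain card_eq_one | two_le_card := (Nat.succ_le_of_lt (Fintype.card_pos (α := ι))).eq_or_lt
  · simp [t, ← card_eq_one]
  · have below_t : (gaussianReal 0 1).real (Iio t) ^ (Fintype.card ι - 1) ≤
        Real.exp (-(c₀ / 2)) := by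
      rw [← compl_Ici, probReal_compl_eq_one_sub measurableSet_Ici]
      exact one_sub_pow_pred_le_exp two_le_card c₀_pos.le measureReal_le_one
        (tail_lower _ (by exact_mod_cast Fintype.card_pos))
    rw [mul_comm]
    gcongr
    · exact sub_nonneg.2 (Real.exp_le_one_iff.2 (by linarith))
    · exact half_le_measureReal_gaussianReal_Iic_zero 1

end LowerBound

section NoisyArgmax

open scoped NNReal

lemma div_two_mul_sqrt_add_le_sqrt_add_sub_sqrt (a v : ℝ≥0) :
    (a : ℝ) / (2 * √(a + v)) ≤ √(a + v) - √v := by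
  have sqrt_le : √(v : ℝ) ≤ √(a + v) := Real.sqrt_le_sqrt (le_add_of_nonneg_left a.2)
  have sq_sqrt_add : √((a : ℝ) + v) ^ 2 = a + v := Real.sq_sqrt (by positivity)
  have sq_sqrt : √(v : ℝ) ^ 2 = v := Real.sq_sqrt v.2
  refine div_le_of_le_mul₀ (by positivity) (sub_nonneg.2 sqrt_le) ?_
  nlinarith

lemma IsEquidistantGaussian.sqrt_sub_sqrt_mul_gaussianMax_le_integral {ι Ω : Type*} [Fintype ι]
    [MeasurableSpace ι] [MeasurableSingletonClass ι] [MeasurableSpace Ω] {P : Measure Ω}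
    {X h : Ω → ι → ℝ} {a v : ℝ≥0} {γ : Ω → ι} (hX : IsEquidistantGaussian X a P)
    (hh : IsEquidistantGaussian h v P) (indep : X ⟂ᵢ[P] h) (hγ : Measurable γ)
    (argmax : ∀ ω j, X ω j + h ω j ≤ X ω (γ ω) + h ω (γ ω)) :
    (√(a + v) - √v) * gaussianMax ι ≤ ∫ ω, X ω (γ ω) ∂P := by
  have := hX.hasGaussianLaw.isProbabilityMeasure
  have : Nonempty ι := (nonempty_of_isProbabilityMeasure P).map γ
  have noise_integrable : Integrable (fun ω => h ω (γ ω)) P :=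
    integrable_apply_of_measurable hh.integrable hγ
  have noise_le : ∫ ω, h ω (γ ω) ∂P ≤ √v * gaussianMax ι := by
    rw [← hh.integral_iSup]
    exact integral_mono noise_integrable (integrable_iSup hh.integrable)
      fun ω => Finite.le_ciSup (h ω) (γ ω)
  have sum_eq : ∫ ω, X ω (γ ω) ∂P + ∫ ω, h ω (γ ω) ∂P = √(a + v) * gaussianMax ι := by
    rw [← integral_add (integrable_apply_of_measurable hX.integrable hγ) noise_integrable,
      ← NNReal.coe_add, ← (hX.add hh indep).integral_iSup]
    refine integral_congr_ae (ae_of_all _ fun ω => ?_)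
    exact le_antisymm (Finite.le_ciSup (fun i => X ω i + h ω i) (γ ω)) (ciSup_le (argmax ω))
  linarith

theorem lambdaQ_noisy_lower_bound_general :
    ∃ C : ℝ, 0 < C ∧
      ∀ (ι Ω : Type*) [Fintype ι] [MeasurableSpace ι] [MeasurableSingletonClass ι]
        [MeasurableSpace Ω] (P : Measure Ω) (X h : Ω → ι → ℝ) (a v : ℝ≥0),
        IsEquidistantGaussian X a P → IsEquidistantGaussian h v P → X ⟂ᵢ[P] h →
      ∀ γ : Ω → ι, Measurable γ → (∀ ω j, X ω j + h ω j ≤ X ω (γ ω) + h ω (γ ω)) →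
      C * (a * √(Real.log (Fintype.card ι) / (a + v))) ≤ ∫ ω, X ω (γ ω) ∂P := by
  obtain ⟨c, c_pos, gaussianMax_lower⟩ := exists_mul_sqrt_log_le_gaussianMax
  refine ⟨c / 2, half_pos c_pos, fun ι Ω _ _ _ _ P X h a v hX hh indep γ hγ argmax => ?_⟩
  have := hX.hasGaussianLaw.isProbabilityMeasure
  have : Nonempty ι := (nonempty_of_isProbabilityMeasure P).map γ
  calc c / 2 * (a * √(Real.log (Fintype.card ι) / (a + v)))
      = a / (2 * √(a + v)) * (c * √(Real.log (Fintype.card ι))) := by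
        rw [Real.sqrt_div (Real.log_natCast_nonneg _)]
        ring
    _ ≤ (√(a + v) - √v) * gaussianMax ι :=
        mul_le_mul (div_two_mul_sqrt_add_le_sqrt_add_sub_sqrt a v) (gaussianMax_lower ι)
          (by positivity) (sub_nonneg.2 (Real.sqrt_le_sqrt (le_add_of_nonneg_left a.2)))
    _ ≤ ∫ ω, X ω (γ ω) ∂P :=
        hX.sqrt_sub_sqrt_mul_gaussianMax_le_integral hh indep hγ argmax

end NoisyArgmax

section SimplexCoding

open scoped NNReal

variable {q : ℕ} {s : Fin q → EuclideanSpace ℝ (Fin (q - 1))}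

lemma IsSimplexCoding.norm_sub_sq (hs : IsSimplexCoding s) {i j : Fin q} (hij : i ≠ j) :
    ‖s i - s j‖ ^ 2 = 2 * (q / (q - 1)) := by
  have two_le_q : (2 : ℝ) ≤ q := by
    exact_mod_cast Fin.nontrivial_iff_two_le.1 ⟨i, j, hij⟩
  have q_sub_one_ne_zero : (q : ℝ) - 1 ≠ 0 := by linarith
  rw [norm_sub_sq_real, hs.1 i, hs.1 j, hs.2.1 i j hij]
  field_simp
  ring

lemma IsSimplexCoding.isEquidistantGaussian_inner (hs : IsSimplexCoding s) {Ω : Type*}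
    [MeasurableSpace Ω] {P : Measure Ω} {g : Ω → EuclideanSpace ℝ (Fin (q - 1))}
    (hg : HasLaw g (stdGaussian (q - 1)) P) :
    IsEquidistantGaussian (fun ω j => ⟪s j, g ω⟫) (q / (q - 1 : ℕ)) P :=
  .of_hasLaw_stdGaussian hg fun i j hij => by
    rw [hs.norm_sub_sq hij, NNReal.coe_div, NNReal.coe_natCast, NNReal.coe_natCast,
      Nat.cast_pred i.pos]

lemma one_le_natCast_div_pred (hq : 2 ≤ q) : (1 : ℝ≥0) ≤ q / (q - 1 : ℕ) := by
  rw [one_le_div (by exact_mod_cast Nat.sub_pos_of_lt hq)]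
  exact_mod_cast Nat.sub_le q 1

lemma sqrt_div_one_add_le_mul_sqrt_div_add {a v : ℝ≥0} {L : ℝ} (ha : 1 ≤ a) (hL : 0 ≤ L) :
    √(L / (1 + v)) ≤ a * √(L / (a + v)) := by
  replace ha : (1 : ℝ) ≤ a := ha
  refine Real.sqrt_le_iff.2 ⟨by positivity, ?_⟩
  rw [mul_pow, Real.sq_sqrt (by positivity), ← mul_div_assoc,
    div_le_div_iff₀ (by positivity) (by positivity), mul_comm ((a : ℝ) ^ 2), mul_assoc]
  gcongr
  linarith [mul_nonneg (sub_nonneg.2 ha) (by positivity : 0 ≤ (a : ℝ) + (a + 1) * v)]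

end SimplexCoding

/-- Noisy version of the `λ(q)` lower bound: if
`γ̄ = argmax_j (⟪s j, g⟫ + h j)` with `g` standard Gaussian and `h_j` i.i.d. `N(0, σ²)`
independent of `g`, then `E ⟪s γ̄, g⟫ ≥ C √(log q / (1 + σ²))`. -/
theorem lambdaQ_noisy_lower_bound :
    ∃ C : ℝ, 0 < C ∧
      ∀ (q : ℕ), 2 ≤ q →
      ∀ (σ : ℝ), 0 < σ →
      ∀ (s : Fin q → EuclideanSpace ℝ (Fin (q - 1))), IsSimplexCoding s →
      ∀ (Ω : Type) (_ : MeasurableSpace Ω) (μ : Measure Ω), IsProbabilityMeasure μ →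
      ∀ (g : Ω → EuclideanSpace ℝ (Fin (q - 1))) (h : Ω → Fin q → ℝ),
        Measurable g → Measurable h →
        Measure.map g μ = stdGaussian (q - 1) →
        Measure.map h μ = (Measure.pi fun _ : Fin q => gaussianReal 0 ⟨σ ^ 2, sq_nonneg σ⟩) →
        IndepFun g h μ →
      ∀ (γ : Ω → Fin q),
        Measurable γ →
        (∀ ω j, ⟪s j, g ω⟫ + h ω j ≤ ⟪s (γ ω), g ω⟫ + h ω (γ ω)) →
      C * Real.sqrt (Real.log q / (1 + σ ^ 2)) ≤ ∫ ω, ⟪s (γ ω), g ω⟫ ∂μ := by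
  obtain ⟨C, C_pos, lower_bound⟩ := lambdaQ_noisy_lower_bound_general
  refine ⟨C, C_pos, fun q hq σ _ s hs Ω _ μ _ g h hg hh g_law h_law indep γ hγ argmax => ?_⟩
  have codewords_equidistant := hs.isEquidistantGaussian_inner ⟨hg.aemeasurable, g_law⟩
  have noise_equidistant : IsEquidistantGaussian h ⟨σ ^ 2, sq_nonneg σ⟩ μ :=
    .of_hasLaw_pi ⟨hh.aemeasurable, h_law⟩
  have codewords_indep : (fun ω j => ⟪s j, g ω⟫) ⟂ᵢ[μ] h :=
    indep.comp (φ := fun x j => ⟪s j, x⟫) (by fun_prop) measurable_id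
  have bound := lower_bound (Fin q) Ω μ _ h _ _ codewords_equidistant noise_equidistant
    codewords_indep γ hγ argmax
  rw [Fintype.card_fin] at bound
  refine le_trans (mul_le_mul_of_nonneg_left ?_ C_pos.le) bound
  exact sqrt_div_one_add_le_mul_sqrt_div_add (v := ⟨σ ^ 2, sq_nonneg σ⟩)
    (one_le_natCast_div_pred hq) (Real.log_natCast_nonneg q)
end

section
/- There exists a universal constant C > 0 such that for all integers 1 ≤ s ≤ d, the set K_1 = { u ∈ ℝ^d : ‖u‖_1 ≤ √s, ‖u‖_2 ≤ 1 } satisfies w(K_1) ≤ C √( s log(2d/s) ). -/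
open MeasureTheory ProbabilityTheory
open scoped RealInnerProductSpace ENNReal Pointwise

/-!
For a threshold `t`, split `|g i| ≤ t + (|g i| - t)⁺`. Pairing the two parts with `u` by the
trivial `ℓ¹`–`ℓ^∞` bound and by Cauchy–Schwarz gives
`|⟪g, u⟫| ≤ t ‖u‖₁ + (∑ i, ((|g i| - t)⁺)²)^(1/2) ‖u‖₂`, uniformly in `u`. The second factor has
small expectation: by Jensen it is at most the root of `∑ i, E ((|g i| - t)⁺)²`, and the exponential
moment bound `y² / 2 ≤ exp y` makes each summand at most `(4 / t²) exp (-t² / 2)`. Choosing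
`t² = 2 log (2d / s)`, so that `d exp (-t² / 2) = s / 2`, both terms are of order
`√(s log (2d / s))`.
-/

open scoped NNReal

lemma integrable_sqrt {Ω : Type*} [MeasurableSpace Ω] {μ : Measure Ω} [IsFiniteMeasure μ]
    {f : Ω → ℝ} (hf : Integrable f μ) : Integrable (fun ω ↦ √(f ω)) μ := by
  refine ((integrable_const 1).add hf.abs).mono'
    (Real.continuous_sqrt.comp_aestronglyMeasurable hf.1) (ae_of_all _ fun ω ↦ ?_)
  rw [Real.norm_of_nonneg (Real.sqrt_nonneg _)]
  refine Real.sqrt_le_iff.2 ⟨by simp only [Pi.add_apply]; positivity, ?_⟩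
  simp only [Pi.add_apply]
  nlinarith [le_abs_self (f ω), sq_nonneg (f ω), sq_abs (f ω), abs_nonneg (f ω)]

lemma integral_sqrt_le_sqrt_integral {Ω : Type*} [MeasurableSpace Ω] {μ : Measure Ω}
    [IsProbabilityMeasure μ] {f : Ω → ℝ} (hf : Integrable f μ) (hf_nonneg : 0 ≤ f) :
    ∫ ω, √(f ω) ∂μ ≤ √(∫ ω, f ω ∂μ) :=
  Real.strictConcaveOn_sqrt.concaveOn.le_map_integral Real.continuous_sqrt.continuousOn
    isClosed_Ici (ae_of_all _ hf_nonneg) hf (integrable_sqrt hf)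

lemma abs_inner_le_mul_sum_abs_add {ι : Type*} [Fintype ι] (x y : EuclideanSpace ℝ ι) (t : ℝ) :
    |⟪x, y⟫| ≤ t * ∑ i, |y i| + √(∑ i, (|x i| - t)⁺ ^ 2) * ‖y‖ := by
  have abs_le_add_posPart (i : ι) : |x i| ≤ t + (|x i| - t)⁺ := by
    linarith [le_posPart (|x i| - t)]
  calc |⟪x, y⟫| = |∑ i, x i * y i| := by simp only [PiLp.inner_apply, Real.inner_apply]
    _ ≤ ∑ i, |x i| * |y i| := by
      simpa only [abs_mul] using Finset.abs_sum_le_sum_abs (fun i ↦ x i * y i) Finset.univ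
    _ ≤ ∑ i, (t + (|x i| - t)⁺) * |y i| := by
      gcongr with i
      exact abs_le_add_posPart i
    _ = t * ∑ i, |y i| + ∑ i, (|x i| - t)⁺ * |y i| := by
      simp only [add_mul, Finset.sum_add_distrib, Finset.mul_sum]
    _ ≤ t * ∑ i, |y i| + √(∑ i, (|x i| - t)⁺ ^ 2) * ‖y‖ := by
      rw [EuclideanSpace.norm_eq]
      gcongr
      exact Real.sum_mul_le_sqrt_mul_sqrt _ _ _

lemma sq_posPart_abs_sub_le {a : ℝ} (ha : 0 < a) (t x : ℝ) :
    (|x| - t)⁺ ^ 2 ≤ 4 / a ^ 2 * Real.exp (-(a * t)) * Real.cosh (a * x) := by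
  rcases le_total (|x| - t) 0 with hxt | hxt
  · rw [posPart_eq_zero.2 hxt, zero_pow two_ne_zero]
    positivity
  have sq_half_le_exp : (a * (|x| - t)) ^ 2 / 2 ≤ Real.exp (a * (|x| - t)) := by
    simpa using Real.pow_div_factorial_le_exp _ (mul_nonneg ha.le hxt) 2
  have exp_le_two_cosh : Real.exp (a * |x|) ≤ 2 * Real.cosh (a * x) := by
    have exp_abs_le := Real.exp_abs_le (a * x)
    rw [abs_mul, abs_of_pos ha] at exp_abs_le
    rw [Real.cosh_eq]
    linarith
  calc (|x| - t)⁺ ^ 2 = 2 / a ^ 2 * ((a * (|x| - t)) ^ 2 / 2) := by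
        rw [posPart_eq_self.2 hxt]
        field_simp
    _ ≤ 2 / a ^ 2 * Real.exp (a * (|x| - t)) := by gcongr
    _ = 2 / a ^ 2 * Real.exp (-(a * t)) * Real.exp (a * |x|) := by
      rw [mul_assoc, ← Real.exp_add]
      ring_nf
    _ ≤ 2 / a ^ 2 * Real.exp (-(a * t)) * (2 * Real.cosh (a * x)) := by gcongr
    _ = 4 / a ^ 2 * Real.exp (-(a * t)) * Real.cosh (a * x) := by ring

section SubGaussian

variable {Ω : Type*} [MeasurableSpace Ω] {μ : Measure Ω} {X : Ω → ℝ} {c : ℝ≥0}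

lemma hasSubgaussianMGF_of_hasLaw_gaussianReal (hX : HasLaw X (gaussianReal 0 c) μ) :
    HasSubgaussianMGF X c μ where
  integrable_exp_mul a := by
    have := integrable_exp_mul_gaussianReal (μ := 0) (v := c) a
    rw [← hX.map_eq] at this
    exact this.comp_aemeasurable hX.aemeasurable
  mgf_le a := by simp [mgf_gaussianReal hX.map_eq]

lemma integrable_cosh_mul (hX : HasSubgaussianMGF X c μ) (a : ℝ) :
    Integrable (fun ω ↦ Real.cosh (a * X ω)) μ := by
  simp only [Real.cosh_eq, ← neg_mul]
  exact ((hX.integrable_exp_mul a).add (hX.integrable_exp_mul (-a))).div_const 2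

lemma integral_cosh_mul_le (hX : HasSubgaussianMGF X c μ) (a : ℝ) :
    ∫ ω, Real.cosh (a * X ω) ∂μ ≤ Real.exp (c * a ^ 2 / 2) := by
  have mgf_neg_le := hX.mgf_le (-a)
  rw [neg_sq] at mgf_neg_le
  calc ∫ ω, Real.cosh (a * X ω) ∂μ = (mgf X μ a + mgf X μ (-a)) / 2 := by
        simp only [Real.cosh_eq, ← neg_mul, mgf]
        rw [integral_div, integral_add (hX.integrable_exp_mul a) (hX.integrable_exp_mul (-a))]
    _ ≤ Real.exp (c * a ^ 2 / 2) := by linarith [hX.mgf_le a]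

lemma integrable_sq_posPart_abs_sub (hX : HasSubgaussianMGF X c μ) (t : ℝ) :
    Integrable (fun ω ↦ (|X ω| - t)⁺ ^ 2) μ := by
  refine ((integrable_cosh_mul hX 1).const_mul (4 / 1 ^ 2 * Real.exp (-(1 * t)))).mono' ?_
    (ae_of_all _ fun ω ↦ ?_)
  · exact (by fun_prop : Continuous fun x : ℝ ↦ (|x| - t)⁺ ^ 2).comp_aestronglyMeasurable
      hX.aestronglyMeasurable
  · rw [Real.norm_of_nonneg (by positivity)]
    exact sq_posPart_abs_sub_le one_pos t (X ω)

lemma integral_sq_posPart_abs_sub_le (hX : HasSubgaussianMGF X c μ) {a : ℝ} (ha : 0 < a) (t : ℝ) :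
    ∫ ω, (|X ω| - t)⁺ ^ 2 ∂μ ≤ 4 / a ^ 2 * Real.exp (c * a ^ 2 / 2 - a * t) := by
  calc ∫ ω, (|X ω| - t)⁺ ^ 2 ∂μ
      ≤ ∫ ω, 4 / a ^ 2 * Real.exp (-(a * t)) * Real.cosh (a * X ω) ∂μ :=
        integral_mono (integrable_sq_posPart_abs_sub hX t) ((integrable_cosh_mul hX a).const_mul _)
          fun ω ↦ sq_posPart_abs_sub_le ha t (X ω)
    _ ≤ 4 / a ^ 2 * Real.exp (-(a * t)) * Real.exp (c * a ^ 2 / 2) := by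
      rw [integral_const_mul]
      gcongr
      exact integral_cosh_mul_le hX a
    _ = 4 / a ^ 2 * Real.exp (c * a ^ 2 / 2 - a * t) := by
      rw [mul_assoc, ← Real.exp_add]
      ring_nf

lemma integral_sqrt_sum_sq_posPart_abs_sub_le [IsProbabilityMeasure μ] {ι : Type*} [Fintype ι]
    {Y : ι → Ω → ℝ} (hY : ∀ i, HasSubgaussianMGF (Y i) c μ) {a : ℝ} (ha : 0 < a) (t : ℝ) :
    ∫ ω, √(∑ i, (|Y i ω| - t)⁺ ^ 2) ∂μ ≤
      √(Fintype.card ι * (4 / a ^ 2 * Real.exp (c * a ^ 2 / 2 - a * t))) := by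
  have integrable_term (i : ι) := integrable_sq_posPart_abs_sub (hY i) t
  calc ∫ ω, √(∑ i, (|Y i ω| - t)⁺ ^ 2) ∂μ
      ≤ √(∫ ω, ∑ i, (|Y i ω| - t)⁺ ^ 2 ∂μ) :=
        integral_sqrt_le_sqrt_integral (integrable_finsetSum _ fun i _ ↦ integrable_term i)
          fun ω ↦ by positivity
    _ = √(∑ i, ∫ ω, (|Y i ω| - t)⁺ ^ 2 ∂μ) := by
      rw [integral_finsetSum _ fun i _ ↦ integrable_term i]
    _ ≤ √(∑ _i : ι, 4 / a ^ 2 * Real.exp (c * a ^ 2 / 2 - a * t)) := by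
      gcongr with i
      exact integral_sq_posPart_abs_sub_le (hY i) ha t
    _ = √(Fintype.card ι * (4 / a ^ 2 * Real.exp (c * a ^ 2 / 2 - a * t))) := by
      rw [Finset.sum_const, Finset.card_univ, nsmul_eq_mul]

end SubGaussian

section MeanWidth

variable {d : ℕ}

instance isProbabilityMeasure_stdGaussian : IsProbabilityMeasure (stdGaussian d) :=
  Measure.isProbabilityMeasure_map (by fun_prop)

lemma hasLaw_coord_stdGaussian (i : Fin d) :
    HasLaw (fun g : EuclideanSpace ℝ (Fin d) ↦ g i) (gaussianReal 0 1) (stdGaussian d) where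
  map_eq := by
    rw [_root_.stdGaussian, Measure.map_map (by fun_prop) (by fun_prop)]
    exact (measurePreserving_eval (fun _ : Fin d ↦ gaussianReal 0 1) i).map_eq

lemma meanWidth_le_two_mul_integral {K : Set (EuclideanSpace ℝ (Fin d))} (hK : K.Nonempty)
    {F : EuclideanSpace ℝ (Fin d) → ℝ} (hF : Integrable F (stdGaussian d))
    (h_le : ∀ g, ∀ u ∈ K, |⟪g, u⟫| ≤ F g) :
    meanWidth K ≤ 2 * ∫ g, F g ∂(stdGaussian d) := by
  obtain ⟨u₀, hu₀⟩ := hK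
  rw [← integral_const_mul]
  refine integral_mono_of_nonneg (ae_of_all _ fun g ↦ ?_) (hF.const_mul 2)
    (ae_of_all _ fun g ↦ ?_)
  · exact Real.sSup_nonneg' ⟨0, ⟨0, ⟨u₀, hu₀, u₀, hu₀, sub_self u₀⟩, inner_zero_right g⟩, le_rfl⟩
  · refine Real.sSup_le ?_ (mul_nonneg zero_le_two ((abs_nonneg _).trans (h_le g u₀ hu₀)))
    rintro _ ⟨_, ⟨u, hu, v, hv, rfl⟩, rfl⟩
    change ⟪g, u - v⟫ ≤ 2 * F g
    rw [inner_sub_right]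
    linarith [le_abs_self ⟪g, u⟫, neg_abs_le ⟪g, v⟫, h_le g u hu, h_le g v hv]

lemma meanWidth_le_of_sum_abs_le_of_norm_le {K : Set (EuclideanSpace ℝ (Fin d))}
    (hK : K.Nonempty) {A R : ℝ} (hA : ∀ u ∈ K, ∑ i, |u i| ≤ A) (hR : ∀ u ∈ K, ‖u‖ ≤ R)
    {t : ℝ} (ht : 0 < t) :
    meanWidth K ≤ 2 * (t * A + √(d * (4 / t ^ 2 * Real.exp (-(t ^ 2 / 2)))) * R) := by
  have coord_subgaussian (i : Fin d) :=
    hasSubgaussianMGF_of_hasLaw_gaussianReal (hasLaw_coord_stdGaussian i)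
  have integrable_excess : Integrable (fun g : EuclideanSpace ℝ (Fin d) ↦
      √(∑ i, (|g i| - t)⁺ ^ 2)) (stdGaussian d) :=
    integrable_sqrt (integrable_finsetSum _ fun i _ ↦
      integrable_sq_posPart_abs_sub (coord_subgaussian i) t)
  have integral_excess_le : ∫ g, √(∑ i, (|g i| - t)⁺ ^ 2) ∂(stdGaussian d) ≤
      √(d * (4 / t ^ 2 * Real.exp (-(t ^ 2 / 2)))) := by
    have exponent_eq : ((1 : ℝ≥0) : ℝ) * t ^ 2 / 2 - t * t = -(t ^ 2 / 2) := by
      rw [NNReal.coe_one]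
      ring
    simpa only [exponent_eq, Fintype.card_fin] using
      integral_sqrt_sum_sq_posPart_abs_sub_le coord_subgaussian ht t
  have R_nonneg : 0 ≤ R := hK.elim fun u hu ↦ (norm_nonneg u).trans (hR u hu)
  calc meanWidth K
      ≤ 2 * ∫ g, (t * A + √(∑ i, (|g i| - t)⁺ ^ 2) * R) ∂(stdGaussian d) :=
        meanWidth_le_two_mul_integral hK ((integrable_const _).add (integrable_excess.mul_const R))
          fun g u hu ↦ (abs_inner_le_mul_sum_abs_add g u t).trans (by
            gcongr
            exacts [hA u hu, hR u hu])
    _ = 2 * (t * A + (∫ g, √(∑ i, (|g i| - t)⁺ ^ 2) ∂(stdGaussian d)) * R) := by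
      rw [integral_add (integrable_const _) (integrable_excess.mul_const R), integral_const,
        probReal_univ, one_smul, integral_mul_const]
    _ ≤ 2 * (t * A + √(d * (4 / t ^ 2 * Real.exp (-(t ^ 2 / 2)))) * R) := by gcongr

end MeanWidth

lemma half_le_log_two_mul_div {s x : ℝ} (hs : 0 < s) (hsx : s ≤ x) :
    1 / 2 ≤ Real.log (2 * x / s) := by
  have log_two_le : Real.log 2 ≤ Real.log (2 * x / s) :=
    Real.log_le_log two_pos ((le_div_iff₀ hs).2 (by linarith))
  linarith [Real.log_two_gt_d9]

lemma sqrt_mul_exp_neg_log_le {s x : ℝ} (hs : 0 < s) (hsx : s ≤ x) :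
    √(x * (2 / Real.log (2 * x / s) * Real.exp (-Real.log (2 * x / s)))) ≤
      2 * √(s * Real.log (2 * x / s)) := by
  have hx : 0 < x := hs.trans_le hsx
  have half_le_log := half_le_log_two_mul_div hs hsx
  rw [Real.exp_neg, Real.exp_log (by positivity), inv_div]
  set L := Real.log (2 * x / s)
  have L_pos : 0 < L := by linarith
  refine Real.sqrt_le_iff.2 ⟨by positivity, ?_⟩
  calc x * (2 / L * (s / (2 * x))) = s / L := by field_simp
    _ ≤ 2 ^ 2 * (s * L) := by
      rw [div_le_iff₀ L_pos]
      nlinarith [mul_le_mul half_le_log half_le_log (by norm_num) L_pos.le]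
    _ = (2 * √(s * L)) ^ 2 := by rw [mul_pow, Real.sq_sqrt (by positivity)]

theorem meanWidth_sparse_relaxation_general {d : ℕ} {s : ℝ} (hs : 0 < s) (hsd : s ≤ d) :
    meanWidth {u : EuclideanSpace ℝ (Fin d) | (∑ i, |u i|) ≤ √s ∧ ‖u‖ ≤ 1} ≤
      7 * √(s * Real.log (2 * d / s)) := by
  have excess_le := sqrt_mul_exp_neg_log_le hs hsd
  have half_le_log := half_le_log_two_mul_div hs hsd
  set L := Real.log (2 * d / s)
  have L_pos : 0 < L := by linarith
  have width_le := meanWidth_le_of_sum_abs_le_of_norm_le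
    (K := {u : EuclideanSpace ℝ (Fin d) | (∑ i, |u i|) ≤ √s ∧ ‖u‖ ≤ 1})
    ⟨0, by simp⟩ (fun _ hu ↦ hu.1) (fun _ hu ↦ hu.2) (t := √(2 * L)) (by positivity)
  have threshold_mul_le : √(2 * L) * √s ≤ 3 / 2 * √(s * L) := by
    rw [← Real.sqrt_mul (by positivity)]
    refine Real.sqrt_le_iff.2 ⟨by positivity, ?_⟩
    rw [mul_pow, Real.sq_sqrt (by positivity)]
    nlinarith [mul_pos hs L_pos]
  have coeff_eq : 4 / (2 * L) = 2 / L := by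
    field_simp
    norm_num
  rw [Real.sq_sqrt (by positivity), mul_div_cancel_left₀ L two_ne_zero, coeff_eq] at width_le
  linarith

/-- Gaussian mean width of the set
`K₁ = {u : ‖u‖₁ ≤ √s, ‖u‖₂ ≤ 1}`: `w(K₁) ≤ C √(s log(2d/s))`. -/
theorem meanWidth_sparse_relaxation :
    ∃ C : ℝ, 0 < C ∧
      ∀ (d s : ℕ), 1 ≤ s → s ≤ d →
        meanWidth {u : EuclideanSpace ℝ (Fin d) |
            (∑ i, |u i|) ≤ Real.sqrt s ∧ ‖u‖ ≤ 1} ≤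
          C * Real.sqrt (s * Real.log (2 * d / s)) := by
  exact ⟨7, by norm_num, fun d s hs hsd ↦
    meanWidth_sparse_relaxation_general (by exact_mod_cast hs) (by exact_mod_cast hsd)⟩
end
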